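/- arXiv:2412.18802 — 3 statements merged into one kernel-verified Lean document; each statement's English description precedes it below -/
import Mathlib

section
/- Let H be a real inner product space, let l, l' be natural numbers with 1 ≤ l' ≤ l, and let r₁, …, r_l ∈ H and a₁, …, a_l ∈ ℝ. Assume the Slater condition: there exists ū ∈ H with ⟨ū, r_i⟩ < a_i for 1 ≤ i ≤ l' and ⟨ū, r_i⟩ = a_i for l' < i ≤ l. Assume moreover that the family (r_i)_{l' < i ≤ l} is linearly independent in H. If μ ∈ ℝ^l satisfies μ_i ≥ 0 for 1 ≤ i ≤ l' and ∑_{i=1}^{l} μ_i (⟨u, r_i⟩ − a_i) ≥ 0 for every u ∈ H, then μ = 0. -/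
open RealInnerProductSpace

/-- Normality step inside Theorem 4.4: under the Slater condition (H4) and
linear independence of the equality-constraint vectors (Remark 4.2), any
multiplier `μ` with `μ_i ≥ 0` on the inequality indices whose Lagrangian term
`∑ i, μ i (⟪u, r i⟫ − a i)` is nonnegative for every `u` must vanish. -/
theorem stmt_7 {H : Type*} [NormedAddCommGroup H] [InnerProductSpace ℝ H]
    (l l' : ℕ) (hl'1 : 1 ≤ l') (hl' : l' ≤ l)
    (r : Fin l → H) (a : Fin l → ℝ)
    (slater : ∃ ubar : H, (∀ i : Fin l, (i : ℕ) < l' → ⟪ubar, r i⟫ < a i) ∧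
      ∀ i : Fin l, l' ≤ (i : ℕ) → ⟪ubar, r i⟫ = a i)
    (hli : LinearIndependent ℝ (fun i : {i : Fin l // l' ≤ (i : ℕ)} => r i))
    (μ : Fin l → ℝ)
    (hμpos : ∀ i : Fin l, (i : ℕ) < l' → 0 ≤ μ i)
    (hμ : ∀ u : H, 0 ≤ ∑ i : Fin l, μ i * (⟪u, r i⟫ - a i)) :
    μ = 0 := by
  obtain ⟨ub, h1, h2⟩ := slater
  have hterm : ∀ i ∈ Finset.univ, μ i * (⟪ub, r i⟫ - a i) ≤ 0 := by
    intro i _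
    rcases lt_or_ge (i : ℕ) l' with h | h
    · exact mul_nonpos_of_nonneg_of_nonpos (hμpos i h) (by linarith [h1 i h])
    · simp [h2 i h]
  have hsum0 : ∑ i : Fin l, μ i * (⟪ub, r i⟫ - a i) = 0 :=
    le_antisymm (Finset.sum_nonpos hterm) (hμ ub)
  have hz := (Finset.sum_eq_zero_iff_of_nonpos hterm).1 hsum0
  have hlt : ∀ i : Fin l, (i : ℕ) < l' → μ i = 0 := by
    intro i h
    rcases mul_eq_zero.1 (hz i (Finset.mem_univ i)) with h0 | h0
    · exact h0
    · linarith [h1 i h]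
  have hS : ∑ i : Fin l, μ i • r i = 0 := by
    set S := ∑ i : Fin l, μ i • r i with hSdef
    have hSS : ⟪S, S⟫ = ∑ i : Fin l, μ i * ⟪S, r i⟫ := by
      have key : ∀ x : H, ⟪x, S⟫ = ∑ i : Fin l, μ i * ⟪x, r i⟫ := by
        intro x
        rw [hSdef, inner_sum]
        exact Finset.sum_congr rfl fun i _ => by rw [real_inner_smul_right]
      exact key S
    have h := hμ (ub - S)
    have he : ∑ i : Fin l, μ i * (⟪ub - S, r i⟫ - a i)
        = ∑ i : Fin l, μ i * (⟪ub, r i⟫ - a i) - ∑ i : Fin l, μ i * ⟪S, r i⟫ := by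
      rw [← Finset.sum_sub_distrib]
      exact Finset.sum_congr rfl fun i _ => by rw [inner_sub_left]; ring
    rw [he, hsum0, ← hSS] at h
    have h3 : ⟪S, S⟫ = 0 := le_antisymm (by linarith) real_inner_self_nonneg
    exact inner_self_eq_zero.1 h3
  have hsub : ∑ i : {i : Fin l // l' ≤ (i : ℕ)}, μ i • r i = 0 := by
    rw [← hS, ← Finset.sum_subtype (Finset.univ.filter fun i : Fin l => l' ≤ (i : ℕ))
      (by simp) (fun i => μ i • r i)]
    refine Finset.sum_subset (Finset.subset_univ _) fun i _ hi => ?_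
    rw [hlt i (by simpa using hi), zero_smul]
  have hge := Fintype.linearIndependent_iff.1 hli (fun i => μ i) hsub
  funext i
  rcases lt_or_ge (i : ℕ) l' with h | h
  · exact hlt i h
  · exact hge ⟨i, h⟩
end

section
/- Let H be a real inner product space, let l, l' be natural numbers with 1 ≤ l' ≤ l, let r₁, …, r_l ∈ H and a₁, …, a_l ∈ ℝ, and let f : H → ℝ be a convex function. Define the feasible set U^ad = {u ∈ H : ⟨u, r_i⟩ ≤ a_i for 1 ≤ i ≤ l' and ⟨u, r_i⟩ = a_i for l' < i ≤ l}. Assume the Slater condition: there exists ū ∈ H with ⟨ū, r_i⟩ < a_i for 1 ≤ i ≤ l' and ⟨ū, r_i⟩ = a_i for l' < i ≤ l; and assume the family (r_i)_{l' < i ≤ l} is linearly independent in H. Suppose û ∈ U^ad minimizes f over U^ad. Then there exists λ̄ ∈ ℝ^l with λ̄_i ≥ 0 for 1 ≤ i ≤ l' such that f(û) ≤ f(u) + 2·∑_{i=1}^{l} λ̄_i (⟨u, r_i⟩ − a_i) for all u ∈ H, and moreover λ̄_i (⟨û, r_i⟩ − a_i) = 0 for every 1 ≤ i ≤ l'. 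-/
open RealInnerProductSpace

lemma aux_surj {H : Type*} [NormedAddCommGroup H] [InnerProductSpace ℝ H]
    {I : Type*} [Fintype I] (r : I → H) (h : LinearIndependent ℝ r) :
    ∃ L : (I → ℝ) →ₗ[ℝ] H, ∀ y i, ⟪L y, r i⟫ = y i := by
  classical
  let G : H →ₗ[ℝ] (I → ℝ) := LinearMap.pi fun i => (innerₛₗ ℝ (r i))
  have hG : ∀ u i, G u i = ⟪u, r i⟫ := fun u i => by
    simp [G, real_inner_comm]
  have hs : LinearMap.range G = ⊤ := by
    by_contra hne
    obtain ⟨φ, hφ, hle⟩ := Submodule.exists_le_ker_of_lt_top _ (lt_top_iff_ne_top.2 hne)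
    apply hφ
    have key : ∑ i, φ (Pi.single i 1) • r i = 0 := by
      rw [← inner_self_eq_zero (𝕜 := ℝ)]
      set v := ∑ i, φ (Pi.single i 1) • r i with hv
      have h0 : φ (G v) = 0 := hle ⟨v, rfl⟩
      rw [LinearMap.pi_apply_eq_sum_univ φ] at h0
      rw [← h0]
      nth_rewrite 2 [hv]
      rw [inner_sum]
      refine Finset.sum_congr rfl fun i _ => ?_
      rw [inner_smul_right, hG, smul_eq_mul, mul_comm]
      congr 2
      ext j
      simp [Pi.single_apply, eq_comm]
    have := Fintype.linearIndependent_iff.1 h _ key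
    refine LinearMap.pi_ext' fun i => ?_
    ext
    simpa using this i
  obtain ⟨L, hL⟩ := G.exists_rightInverse_of_surjective hs
  refine ⟨L, fun y i => ?_⟩
  rw [← hG]
  exact congrFun (LinearMap.congr_fun hL y) i

/-- Lagrange-multiplier existence (convex-separation argument in the proof of
Theorem 4.4): if a convex `f` is minimized over the affine-constrained set
`U^ad` at `uhat`, the Slater condition holds and the equality-constraint
vectors are linearly independent, then there is a multiplier `λ̄` with
`λ̄_i ≥ 0` on inequality indices such that
`f uhat ≤ f u + 2 ∑ i, λ̄ i (⟪u, r i⟫ − a i)` for all `u`, and complementary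
slackness `λ̄_i (⟪uhat, r i⟫ − a i) = 0` holds on inequality indices. -/
theorem stmt_8 {H : Type*} [NormedAddCommGroup H] [InnerProductSpace ℝ H]
    (l l' : ℕ) (hl'1 : 1 ≤ l') (hl' : l' ≤ l)
    (r : Fin l → H) (a : Fin l → ℝ)
    (f : H → ℝ) (hfconv : ConvexOn ℝ Set.univ f)
    (Uad : Set H)
    (hUad : Uad = {u : H | (∀ i : Fin l, (i : ℕ) < l' → ⟪u, r i⟫ ≤ a i) ∧
      ∀ i : Fin l, l' ≤ (i : ℕ) → ⟪u, r i⟫ = a i})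
    (slater : ∃ ubar : H, (∀ i : Fin l, (i : ℕ) < l' → ⟪ubar, r i⟫ < a i) ∧
      ∀ i : Fin l, l' ≤ (i : ℕ) → ⟪ubar, r i⟫ = a i)
    (hli : LinearIndependent ℝ (fun i : {i : Fin l // l' ≤ (i : ℕ)} => r i))
    (uhat : H) (huhat : uhat ∈ Uad) (hmin : ∀ u ∈ Uad, f uhat ≤ f u) :
    ∃ lambar : Fin l → ℝ,
      (∀ i : Fin l, (i : ℕ) < l' → 0 ≤ lambar i) ∧
      (∀ u : H, f uhat ≤ f u + 2 * ∑ i : Fin l, lambar i * (⟪u, r i⟫ - a i)) ∧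
      (∀ i : Fin l, (i : ℕ) < l' → lambar i * (⟪uhat, r i⟫ - a i) = 0) := by
  classical
  subst hUad
  obtain ⟨ubar, hub1, hub2⟩ := slater
  obtain ⟨L0, hL0⟩ := aux_surj _ hli
  let L : (Fin l → ℝ) →ₗ[ℝ] H := L0 ∘ₗ LinearMap.funLeft ℝ ℝ Subtype.val
  have hL : ∀ y (i : Fin l), l' ≤ (i : ℕ) → ⟪L y, r i⟫ = y i := fun y i hi =>
    hL0 _ ⟨i, hi⟩
  have hLc : Continuous L := L.continuous_of_finiteDimensional
  let A : Set (ℝ × (Fin l → ℝ)) := {p | ∃ u, f u - f uhat < p.1 ∧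
    (∀ i : Fin l, (i : ℕ) < l' → ⟪u, r i⟫ - a i < p.2 i) ∧
    (∀ i : Fin l, l' ≤ (i : ℕ) → ⟪u, r i⟫ - a i = p.2 i)}
  have hAconv : Convex ℝ A := by
    rw [convex_iff_forall_pos]
    rintro p ⟨u, h1, h2, h3⟩ q ⟨v, k1, k2, k3⟩ s t hs ht hst
    refine ⟨s • u + t • v, ?_, ?_, ?_⟩
    · have := hfconv.2 (Set.mem_univ u) (Set.mem_univ v) hs.le ht.le hst
      simp only [smul_eq_mul] at this
      simp only [Prod.fst_add, Prod.smul_fst, smul_eq_mul]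
      have e : f uhat = s * f uhat + t * f uhat := by rw [← add_mul, hst, one_mul]
      have := mul_lt_mul_of_pos_left h1 hs
      have := mul_lt_mul_of_pos_left k1 ht
      linarith
    · intro i hi
      simp only [Prod.snd_add, Prod.smul_snd, smul_eq_mul, Pi.add_apply, Pi.smul_apply,
        inner_add_left, real_inner_smul_left]
      have e : a i = s * a i + t * a i := by rw [← add_mul, hst, one_mul]
      have := mul_lt_mul_of_pos_left (h2 i hi) hs
      have := mul_lt_mul_of_pos_left (k2 i hi) ht
      linarith
    · intro i hi
      simp only [Prod.snd_add, Prod.smul_snd, smul_eq_mul, Pi.add_apply, Pi.smul_apply,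
        inner_add_left, real_inner_smul_left]
      rw [← h3 i hi, ← k3 i hi]
      have e : a i = s * a i + t * a i := by rw [← add_mul, hst, one_mul]
      linarith
  have hAopen : IsOpen A := by
    rw [isOpen_iff_mem_nhds]
    rintro ⟨t0, y0⟩ ⟨u, h1, h2, h3⟩
    have hfc : Continuous fun y : Fin l → ℝ => f (L y + (u - L y0)) := by
      have hc : ConvexOn ℝ Set.univ fun y : Fin l → ℝ => f (L y + (u - L y0)) :=
        (hfconv.translate_left (u - L y0)).comp_linearMap L
      have := hc.continuousOn isOpen_univ
      rwa [continuousOn_univ] at this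
    have hB : IsOpen {p : ℝ × (Fin l → ℝ) | f (L p.2 + (u - L y0)) - f uhat < p.1 ∧
        ∀ i : Fin l, (i : ℕ) < l' → ⟪L p.2 + (u - L y0), r i⟫ - a i < p.2 i} := by
      refine IsOpen.and ?_ ?_
      · exact isOpen_lt ((hfc.comp continuous_snd).sub continuous_const) continuous_fst
      · simp only [Set.setOf_forall]
        refine isOpen_iInter_of_finite fun i => isOpen_iInter_of_finite fun _ => ?_
        exact isOpen_lt (by fun_prop) (by fun_prop)
    refine Filter.mem_of_superset (hB.mem_nhds ⟨by simpa using h1, by simpa using h2⟩) ?_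
    rintro ⟨t, y⟩ ⟨k1, k2⟩
    refine ⟨_, k1, k2, fun i hi => ?_⟩
    have := h3 i hi
    simp only [inner_add_left, inner_sub_left, hL _ i hi] at this ⊢
    linarith
  have h0A : (0 : ℝ × (Fin l → ℝ)) ∉ A := by
    rintro ⟨u, h1, h2, h3⟩
    have := hmin u ⟨fun i hi => by have := h2 i hi; simp at this; linarith,
      fun i hi => by have := h3 i hi; simp at this; linarith⟩
    simp at h1
    linarith
  obtain ⟨φ, hφ⟩ := geometric_hahn_banach_point_open hAconv hAopen h0A
  obtain ⟨α, μ, hφe⟩ : ∃ (α : ℝ) (μ : Fin l → ℝ), ∀ t y, φ (t, y) = α * t + ∑ i, μ i * y i := by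
    refine ⟨φ (1, 0), fun i => φ (0, Pi.single i 1), fun t y => ?_⟩
    have e : ((t, y) : ℝ × (Fin l → ℝ)) = t • (1, 0) + ∑ i, y i • (0, Pi.single i 1) := by
      ext j
      · simp [Prod.fst_sum]
      · simp [Prod.snd_sum, Finset.sum_apply, Pi.single_apply]
    conv_lhs => rw [e]
    simp only [map_add, map_sum, map_smul, smul_eq_mul]
    simp only [mul_comm]
  have hpos : ∀ t y, (t, y) ∈ A → 0 < α * t + ∑ i, μ i * y i := fun t y h => by
    have := hφ _ h
    rwa [map_zero, hφe] at this
  obtain ⟨T, hT0, hT⟩ : ∃ T : ℝ, 0 < T ∧ f ubar - f uhat < T :=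
    ⟨|f ubar - f uhat| + 1, by positivity, by linarith [le_abs_self (f ubar - f uhat)]⟩
  have hα : 0 < α := by
    have := hpos T 0 ⟨ubar, hT, fun i hi => by simpa using hub1 i hi,
      fun i hi => by simp [hub2 i hi]⟩
    simp at this
    exact pos_of_mul_pos_left this hT0.le
  have hμ : ∀ i : Fin l, (i : ℕ) < l' → 0 ≤ μ i := by
    intro i hi
    by_contra! hneg
    have h := hpos T (Pi.single i (α * T / (-μ i))) ⟨ubar, hT, fun j hj => ?_, fun j hj => ?_⟩
    · simp [Pi.single_apply] at h
      have : μ i * (α * T / μ i) = α * T := by field_simp [hneg.ne]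
      have : μ i * (α * T / (-μ i)) = -(α * T) := by rw [div_neg, mul_neg, this]
      simp only [div_neg, mul_neg] at this h
      linarith
    · have h1 : 0 ≤ (Pi.single i (α * T / (-μ i)) : Fin l → ℝ) j := by
        have : 0 ≤ α * T / (-μ i) := div_nonneg (by positivity) (by linarith)
        by_cases hij : j = i
        · subst hij; simpa using this
        · simp [hij]
      have := hub1 j hj
      show _ < (Pi.single i (α * T / (-μ i)) : Fin l → ℝ) j
      linarith
    · have hij : j ≠ i := by rintro rfl; omega
      simp [hij, hub2 j hj]
  have hmain : ∀ u, 0 ≤ α * (f u - f uhat) + ∑ i, μ i * (⟪u, r i⟫ - a i) := by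
    intro u
    set c : Fin l → ℝ := fun i => if (i : ℕ) < l' then 1 else 0 with hc
    have hK : 0 ≤ ∑ i, μ i * c i := Finset.sum_nonneg fun i _ => by
      by_cases hi : (i : ℕ) < l'
      · simpa [hc, hi] using hμ i hi
      · simp [hc, hi]
    refine le_of_forall_pos_le_add fun ε hε => ?_
    have hd : 0 < α + ∑ i, μ i * c i := by linarith
    have hδ : 0 < ε / (α + ∑ i, μ i * c i) := by positivity
    have hδe : ε / (α + ∑ i, μ i * c i) * (α + ∑ i, μ i * c i) = ε := div_mul_cancel₀ _ hd.ne'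
    set δ := ε / (α + ∑ i, μ i * c i)
    have h := hpos (f u - f uhat + δ) (fun i => ⟪u, r i⟫ - a i + δ * c i)
      ⟨u, by simpa using hδ, fun i hi => by simpa [hc, hi] using hδ,
        fun i hi => by simp [hc, not_lt.2 hi]⟩
    have e : ∑ i, μ i * (⟪u, r i⟫ - a i + δ * c i) =
        ∑ i, μ i * (⟪u, r i⟫ - a i) + δ * ∑ i, μ i * c i := by
      rw [Finset.mul_sum, ← Finset.sum_add_distrib]
      exact Finset.sum_congr rfl fun i _ => by ring
    rw [e] at h
    linarith
  refine ⟨fun i => μ i / (2 * α), fun i hi => div_nonneg (hμ i hi) (by positivity), ?_, ?_⟩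
  · intro u
    have e : 2 * ∑ i, μ i / (2 * α) * (⟪u, r i⟫ - a i) =
        (∑ i, μ i * (⟪u, r i⟫ - a i)) / α := by
      rw [Finset.mul_sum, Finset.sum_div]
      exact Finset.sum_congr rfl fun i _ => by field_simp
    rw [e]
    have h2 : 0 ≤ (α * (f u - f uhat) + ∑ i, μ i * (⟪u, r i⟫ - a i)) / α :=
      div_nonneg (hmain u) hα.le
    rw [add_div, mul_div_cancel_left₀ _ hα.ne'] at h2
    linarith
  · have hle : ∀ i ∈ Finset.univ, μ i * (⟪uhat, r i⟫ - a i) ≤ 0 := by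
      intro i _
      by_cases hi : (i : ℕ) < l'
      · exact mul_nonpos_of_nonneg_of_nonpos (hμ i hi) (by linarith [huhat.1 i hi])
      · rw [huhat.2 i (not_lt.1 hi)]; simp
    have h0 : ∑ i, μ i * (⟪uhat, r i⟫ - a i) = 0 :=
      le_antisymm (Finset.sum_nonpos hle) (by simpa using hmain uhat)
    intro i _
    have := (Finset.sum_eq_zero_iff_of_nonpos hle).1 h0 i (Finset.mem_univ i)
    rw [div_mul_eq_mul_div, this, zero_div]
end

section
/- Let H be a real Hilbert space, let l, l' be natural numbers with 1 ≤ l' ≤ l, let r₁, …, r_l ∈ H and a₁, …, a_l ∈ ℝ, let B : H × H → ℝ be a continuous symmetric bilinear form for which there exists ε > 0 with B(v, v) ≥ ε‖v‖² for all v ∈ H, let ℓ : H → ℝ be a continuous linear functional and c ∈ ℝ, and define f(u) = B(u, u) + ℓ(u) + c. Define the feasible set U^ad = {u ∈ H : ⟨u, r_i⟩ ≤ a_i for 1 ≤ i ≤ l' and ⟨u, r_i⟩ = a_i for l' < i ≤ l}, the dual cone U₀ = {λ ∈ ℝ^l : λ_i ≥ 0 for 1 ≤ i ≤ l'}, and the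 Lagrangian dual function g(λ) = inf over u ∈ H of [f(u) + 2·∑_{i=1}^{l} λ_i (⟨u, r_i⟩ − a_i)]. Assume the Slater condition: there exists ū ∈ H with ⟨ū, r_i⟩ < a_i for 1 ≤ i ≤ l' and ⟨ū, r_i⟩ = a_i for l' < i ≤ l; and assume the family (r_i)_{l' < i ≤ l} is linearly independent. Then f attains its infimum over U^ad at some û ∈ U^ad, g attains its supremum over U₀ at some λ* ∈ U₀, and strong duality holds: f(û) = g(λ*) = max over λ ∈ U₀ of g(λ) = min over u ∈ U^ad of f(u). -/
open RealInnerProductSpace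


theorem farkas_aux {V ι : Type*} [AddCommGroup V] [Module ℝ V] [DecidableEq ι] (s : Finset ι) :
    ∀ (A : ι → V →ₗ[ℝ] ℝ) (b : V →ₗ[ℝ] ℝ),
      (∀ x, (∀ j ∈ s, A j x ≤ 0) → b x ≤ 0) →
      ∃ w : ι → ℝ, (∀ j, 0 ≤ w j) ∧ ∀ x, b x = ∑ j ∈ s, w j * A j x := by
  induction s using Finset.induction_on with
  | empty =>
    intro A b h
    refine ⟨fun _ => 0, fun _ => le_rfl, fun x => ?_⟩
    have h1 := h x (by simp)
    have h2 := h (-x) (by simp)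
    rw [map_neg] at h2
    simp
    linarith
  | insert n s hn ih =>
    intro A b h
    by_cases hc : ∀ x, (∀ j ∈ s, A j x ≤ 0) → b x ≤ 0
    · obtain ⟨w, hw, hb⟩ := ih A b hc
      refine ⟨fun j => if j = n then 0 else w j, fun j => ?_, fun x => ?_⟩
      · dsimp only
        split_ifs
        · exact le_rfl
        · exact hw j
      · rw [Finset.sum_insert hn, hb x]
        simp only [if_true, zero_mul, zero_add]
        refine Finset.sum_congr rfl fun j hj => ?_
        rw [if_neg (ne_of_mem_of_not_mem hj hn)]
    · push Not at hc
      obtain ⟨x0, hx0, hb0⟩ := hc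
      have hpos : 0 < A n x0 := by
        by_contra hle
        push Not at hle
        have := h x0 (by
          intro j hj
          rcases Finset.mem_insert.1 hj with rfl | hj
          · exact hle
          · exact hx0 j hj)
        linarith
      obtain ⟨w, hw, hb⟩ := ih (fun j => A j - (A j x0 / A n x0) • A n)
        (b - (b x0 / A n x0) • A n) (by
          intro x hx
          have key := h (x - (A n x / A n x0) • x0) (by
            intro j hj
            rcases Finset.mem_insert.1 hj with rfl | hj
            · simp only [map_sub, map_smul, smul_eq_mul]
              rw [div_mul_cancel₀ _ hpos.ne']
              simp
            · have := hx j hj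
              simp only [map_sub, map_smul, smul_eq_mul, LinearMap.sub_apply,
                LinearMap.smul_apply] at this ⊢
              calc _ = A j x - A j x0 / A n x0 * A n x := by ring
                _ ≤ 0 := this)
          simp only [map_sub, map_smul, smul_eq_mul, LinearMap.sub_apply,
                LinearMap.smul_apply] at key ⊢
          calc _ = b x - A n x / A n x0 * b x0 := by ring
            _ ≤ 0 := key)
      refine ⟨fun j => if j = n then (b x0 - ∑ j ∈ s, w j * A j x0) / A n x0 else w j,
        fun j => ?_, fun x => ?_⟩
      · dsimp only
        split_ifs
        · apply div_nonneg _ hpos.le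
          have : ∑ j ∈ s, w j * A j x0 ≤ 0 :=
            Finset.sum_nonpos fun j hj => mul_nonpos_of_nonneg_of_nonpos (hw j) (hx0 j hj)
          linarith
        · exact hw j
      · rw [Finset.sum_insert hn]
        simp only [if_true]
        have e1 : ∑ j ∈ s, (if j = n then (b x0 - ∑ j ∈ s, w j * A j x0) / A n x0 else w j) * A j x
            = ∑ j ∈ s, w j * A j x := by
          refine Finset.sum_congr rfl fun j hj => ?_
          rw [if_neg (ne_of_mem_of_not_mem hj hn)]
        rw [e1]
        have := hb x
        simp only [smul_eq_mul, LinearMap.sub_apply, LinearMap.smul_apply] at this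
        have e2 : ∑ j ∈ s, w j * (A j x - A j x0 / A n x0 * A n x)
            = ∑ j ∈ s, w j * A j x - (∑ j ∈ s, w j * A j x0) / A n x0 * A n x := by
          rw [Finset.sum_div, Finset.sum_mul, ← Finset.sum_sub_distrib]
          refine Finset.sum_congr rfl fun j _ => ?_
          ring
        rw [e2] at this
        rw [sub_div, sub_mul]
        linarith

theorem exists_min_aux {H : Type*} [NormedAddCommGroup H] [InnerProductSpace ℝ H]
    [CompleteSpace H] (B : H →L[ℝ] H →L[ℝ] ℝ)
    (hsymm : ∀ x y : H, B x y = B y x)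
    (ε : ℝ) (hε : 0 < ε) (hcoer : ∀ v : H, ε * ‖v‖ ^ 2 ≤ B v v)
    (ℓ : H →L[ℝ] ℝ) (c : ℝ)
    (f : H → ℝ) (hf : ∀ u : H, f u = B u u + ℓ u + c)
    (K : Set H) (hne : K.Nonempty) (hcl : IsClosed K) (hcv : Convex ℝ K) :
    ∃ u ∈ K, ∀ v ∈ K, f u ≤ f v := by
  have hbdd : BddBelow (f '' K) := by
    refine ⟨c - ‖ℓ‖ ^ 2 / (4 * ε), ?_⟩
    rintro _ ⟨u, -, rfl⟩
    rw [hf]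
    have h1 := hcoer u
    have h2 : -(‖ℓ‖ * ‖u‖) ≤ ℓ u := by
      have := ℓ.le_opNorm u
      rw [Real.norm_eq_abs] at this
      linarith [neg_abs_le (ℓ u)]
    have h3 : ε * ‖u‖ ^ 2 - ‖ℓ‖ * ‖u‖ + ‖ℓ‖ ^ 2 / (4 * ε)
        = ε * (‖u‖ - ‖ℓ‖ / (2 * ε)) ^ 2 := by
      field_simp
      ring
    have h4 : 0 ≤ ε * (‖u‖ - ‖ℓ‖ / (2 * ε)) ^ 2 := by positivity
    linarith
  have hmin : ∀ v ∈ K, sInf (f '' K) ≤ f v := fun v hv =>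
    csInf_le hbdd (Set.mem_image_of_mem f hv)
  have hex : ∀ n : ℕ, ∃ u ∈ K, f u < sInf (f '' K) + 1 / ((n : ℝ) + 1) := by
    intro n
    obtain ⟨_, ⟨u, hu, rfl⟩, h⟩ := Real.lt_sInf_add_pos (hne.image f)
      (show (0:ℝ) < 1 / ((n : ℝ) + 1) by positivity)
    exact ⟨u, hu, h⟩
  choose u huK hu using hex
  have hcau : CauchySeq u := by
    refine cauchySeq_of_le_tendsto_0 (fun N : ℕ => Real.sqrt (4 / ε * (1 / ((N : ℝ) + 1)))) ?_ ?_
    · intro n m N hn hm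
      apply Real.le_sqrt_of_sq_le
      rw [dist_eq_norm]
      have hmid := hmin _ (hcv (huK n) (huK m) (by norm_num : (0:ℝ) ≤ 1 / 2)
        (by norm_num : (0:ℝ) ≤ 1 / 2) (by norm_num))
      have hpar : B (u n - u m) (u n - u m) = 2 * f (u n) + 2 * f (u m)
          - 4 * f ((1 / 2 : ℝ) • u n + (1 / 2 : ℝ) • u m) := by
        simp only [hf, map_add, map_sub, map_smul, ContinuousLinearMap.add_apply,
          ContinuousLinearMap.sub_apply, ContinuousLinearMap.smul_apply, smul_eq_mul]
        rw [hsymm (u m) (u n)]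
        ring
      have hc1 := hcoer (u n - u m)
      have a1 : 1 / ((n : ℝ) + 1) ≤ 1 / ((N : ℝ) + 1) := by gcongr
      have a2 : 1 / ((m : ℝ) + 1) ≤ 1 / ((N : ℝ) + 1) := by gcongr
      have h1 := hu n
      have h2 := hu m
      have h3 : ε * ‖u n - u m‖ ^ 2 ≤ 4 * (1 / ((N : ℝ) + 1)) := by linarith
      calc ‖u n - u m‖ ^ 2 = (ε * ‖u n - u m‖ ^ 2) / ε := by field_simp
        _ ≤ (4 * (1 / ((N : ℝ) + 1))) / ε := by gcongr
        _ = _ := by ring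
    · have := ((tendsto_one_div_add_atTop_nhds_zero_nat (𝕜 := ℝ)).const_mul (4 / ε)).sqrt
      simpa using this
  obtain ⟨x, hx⟩ := cauchySeq_tendsto_of_complete hcau
  have hxK : x ∈ K := hcl.mem_of_tendsto hx (Filter.Eventually.of_forall huK)
  refine ⟨x, hxK, fun v hv => le_trans ?_ (hmin v hv)⟩
  have hfc : Continuous f := by
    have : f = fun u => B u u + ℓ u + c := funext hf
    rw [this]
    fun_prop
  have t1 := (hfc.tendsto x).comp hx
  have t2 := (tendsto_one_div_add_atTop_nhds_zero_nat (𝕜 := ℝ)).const_add (sInf (f '' K))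
  rw [add_zero] at t2
  exact le_of_tendsto_of_tendsto' t1 t2 (fun n => (hu n).le)

/-- Strong duality (Theorem 4.4, abstracted): for a coercive continuous
quadratic functional `f u = B u u + ℓ u + c` on a real Hilbert space, affine
constraints satisfying the Slater condition with linearly independent
equality-constraint vectors, the primal problem attains its minimum at some
`uhat ∈ U^ad`, the Lagrangian dual `g` attains its maximum at some
`λ* ∈ U₀`, and `f uhat = g λ*`. -/
theorem stmt_9 {H : Type*} [NormedAddCommGroup H] [InnerProductSpace ℝ H]
    [CompleteSpace H]
    (l l' : ℕ) (hl'1 : 1 ≤ l') (hl' : l' ≤ l)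
    (r : Fin l → H) (a : Fin l → ℝ)
    (B : H →L[ℝ] H →L[ℝ] ℝ)
    (hsymm : ∀ x y : H, B x y = B y x)
    (ε : ℝ) (hε : 0 < ε) (hcoer : ∀ v : H, ε * ‖v‖ ^ 2 ≤ B v v)
    (ℓ : H →L[ℝ] ℝ) (c : ℝ)
    (f : H → ℝ) (hf : ∀ u : H, f u = B u u + ℓ u + c)
    (Uad : Set H)
    (hUad : Uad = {u : H | (∀ i : Fin l, (i : ℕ) < l' → ⟪u, r i⟫ ≤ a i) ∧
      ∀ i : Fin l, l' ≤ (i : ℕ) → ⟪u, r i⟫ = a i})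
    (U₀ : Set (Fin l → ℝ))
    (hU₀ : U₀ = {lam : Fin l → ℝ | ∀ i : Fin l, (i : ℕ) < l' → 0 ≤ lam i})
    (g : (Fin l → ℝ) → EReal)
    (hg : ∀ lam : Fin l → ℝ,
      g lam = ⨅ u : H,
        ((f u + 2 * ∑ i : Fin l, lam i * (⟪u, r i⟫ - a i) : ℝ) : EReal))
    (slater : ∃ ubar : H, (∀ i : Fin l, (i : ℕ) < l' → ⟪ubar, r i⟫ < a i) ∧
      ∀ i : Fin l, l' ≤ (i : ℕ) → ⟪ubar, r i⟫ = a i)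
    (hli : LinearIndependent ℝ (fun i : {i : Fin l // l' ≤ (i : ℕ)} => r i)) :
    ∃ uhat : H, ∃ lamstar : Fin l → ℝ,
      uhat ∈ Uad ∧ lamstar ∈ U₀ ∧
      (∀ u ∈ Uad, f uhat ≤ f u) ∧
      (∀ lam ∈ U₀, g lam ≤ g lamstar) ∧
      ((f uhat : ℝ) : EReal) = g lamstar := by
  classical
  have hconv : Convex ℝ Uad := by
    rw [hUad]
    intro x hx y hy s t hs ht hst
    refine ⟨fun i hi => ?_, fun i hi => ?_⟩
    · rw [inner_add_left, real_inner_smul_left, real_inner_smul_left]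
      have h1 := mul_le_mul_of_nonneg_left (hx.1 i hi) hs
      have h2 := mul_le_mul_of_nonneg_left (hy.1 i hi) ht
      have h3 : s * a i + t * a i = a i := by rw [← add_mul, hst, one_mul]
      linarith
    · rw [inner_add_left, real_inner_smul_left, real_inner_smul_left, hx.2 i hi, hy.2 i hi,
        ← add_mul, hst, one_mul]
  have hclosed : IsClosed Uad := by
    rw [hUad]
    simp only [Set.setOf_and, Set.setOf_forall]
    refine IsClosed.inter ?_ ?_
    · exact isClosed_iInter fun i => isClosed_iInter fun _ =>
        isClosed_le (by fun_prop) (by fun_prop)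
    · exact isClosed_iInter fun i => isClosed_iInter fun _ =>
        isClosed_eq (by fun_prop) (by fun_prop)
  have hne : Uad.Nonempty := by
    obtain ⟨ub, h1, h2⟩ := slater
    refine ⟨ub, ?_⟩
    rw [hUad]
    exact ⟨fun i hi => (h1 i hi).le, h2⟩
  obtain ⟨p, hpK, hmin⟩ := exists_min_aux B hsymm ε hε hcoer ℓ c f hf Uad hne hclosed hconv
  have hp := hpK
  rw [hUad] at hp
  obtain ⟨hp1, hp2⟩ := hp
  have hexp : ∀ (d : H), f (p + d) = f p + (2 * B p d + ℓ d) + B d d := by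
    intro d
    simp only [hf, map_add, ContinuousLinearMap.add_apply]
    rw [hsymm d p]
    ring
  -- first-order condition
  have hfoc : ∀ d : H, (∀ i : Fin l, ⟪p, r i⟫ = a i → ⟪d, r i⟫ ≤ 0) →
      (∀ i : Fin l, l' ≤ (i : ℕ) → ⟪d, r i⟫ = 0) → 0 ≤ 2 * B p d + ℓ d := by
    intro d hd1 hd2
    have hev : ∀ᶠ t : ℝ in nhdsWithin 0 (Set.Ioi 0), p + t • d ∈ Uad := by
      have h1 : ∀ i : Fin l, ∀ᶠ t : ℝ in nhdsWithin 0 (Set.Ioi 0),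
          ((i : ℕ) < l' → ⟪p + t • d, r i⟫ ≤ a i) := by
        intro i
        by_cases hi : (i : ℕ) < l'
        · rcases (hp1 i hi).lt_or_eq with hlt | heq
          · have hc : Continuous fun t : ℝ => ⟪p + t • d, r i⟫ := by fun_prop
            have := (hc.tendsto 0).eventually (isOpen_Iio.mem_nhds
              (show ⟪p + (0 : ℝ) • d, r i⟫ ∈ Set.Iio (a i) by simpa using hlt))
            filter_upwards [nhdsWithin_le_nhds this] with t ht _
            exact le_of_lt ht
          · filter_upwards [self_mem_nhdsWithin] with t ht _
            rw [inner_add_left, real_inner_smul_left, heq]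
            have := mul_nonpos_of_nonneg_of_nonpos (le_of_lt (Set.mem_Ioi.1 ht)) (hd1 i heq)
            linarith
        · exact Filter.Eventually.of_forall fun t h => absurd h hi
      filter_upwards [Filter.eventually_all.2 h1] with t ht
      rw [hUad]
      refine ⟨ht, fun i hi => ?_⟩
      rw [inner_add_left, real_inner_smul_left, hd2 i hi, hp2 i hi]
      simp
    have hev2 : ∀ᶠ t : ℝ in nhdsWithin 0 (Set.Ioi 0), 0 ≤ (2 * B p d + ℓ d) + t * B d d := by
      filter_upwards [hev, self_mem_nhdsWithin] with t ht htpos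
      have htpos : 0 < t := htpos
      have h := hmin _ ht
      rw [hexp] at h
      simp only [map_smul, ContinuousLinearMap.smul_apply, smul_eq_mul] at h
      have h' : 0 ≤ t * ((2 * B p d + ℓ d) + t * B d d) := by linarith
      exact nonneg_of_mul_nonneg_right h' htpos
    have hc : Continuous fun t : ℝ => (2 * B p d + ℓ d) + t * B d d := by fun_prop
    have ht := (hc.tendsto 0).mono_left (nhdsWithin_le_nhds (s := Set.Ioi (0:ℝ)))
    have := ge_of_tendsto ht hev2
    simpa using this
  -- Farkas
  obtain ⟨w, hw, hwb⟩ := farkas_aux (V := H) (ι := Fin l ⊕ Fin l) Finset.univ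
    (Sum.elim (fun i => if ⟪p, r i⟫ = a i then (innerSL ℝ (r i)).toLinearMap else 0)
      (fun i => if l' ≤ (i : ℕ) then -(innerSL ℝ (r i)).toLinearMap else 0))
    (-((2 : ℝ) • (B p).toLinearMap + ℓ.toLinearMap)) (by
      intro d hd
      have hA : ∀ i : Fin l, ⟪p, r i⟫ = a i → ⟪d, r i⟫ ≤ 0 := by
        intro i hi
        have := hd (Sum.inl i) (Finset.mem_univ _)
        rw [Sum.elim_inl, if_pos hi] at this
        rw [real_inner_comm]
        simpa using this
      have := hfoc d hA (by
        intro i hi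
        apply le_antisymm (hA i (hp2 i hi))
        have := hd (Sum.inr i) (Finset.mem_univ _)
        rw [Sum.elim_inr, if_pos hi] at this
        rw [real_inner_comm]
        simpa using this)
      simp only [LinearMap.neg_apply, LinearMap.add_apply, LinearMap.smul_apply, smul_eq_mul,
        ContinuousLinearMap.coe_coe]
      linarith)
  let lam : Fin l → ℝ := fun i => ((if ⟪p, r i⟫ = a i then w (Sum.inl i) else 0)
    - (if l' ≤ (i : ℕ) then w (Sum.inr i) else 0)) / 2
  have hstat : ∀ d : H, 2 * B p d + ℓ d + 2 * ∑ i, lam i * ⟪d, r i⟫ = 0 := by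
    intro d
    have h := hwb d
    rw [Fintype.sum_sum_type] at h
    simp only [LinearMap.neg_apply, LinearMap.add_apply, LinearMap.smul_apply, smul_eq_mul,
        ContinuousLinearMap.coe_coe, Sum.elim_inl, Sum.elim_inr] at h
    have e : 2 * ∑ i, lam i * ⟪d, r i⟫ = -(2 * B p d + ℓ d) := by
      rw [h, ← Finset.sum_add_distrib, Finset.mul_sum]
      refine Finset.sum_congr rfl fun i _ => ?_
      simp only [lam]
      rw [real_inner_comm (r i) d]
      split_ifs <;> simp <;> ring
    linarith
  have hcomp : ∀ i, lam i * (⟪p, r i⟫ - a i) = 0 := by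
    intro i
    by_cases hi : ⟪p, r i⟫ = a i
    · rw [hi]; simp
    · have hi2 : ¬ l' ≤ (i : ℕ) := fun h => hi (hp2 i h)
      simp [lam, hi, hi2]
  have hlamU : lam ∈ U₀ := by
    rw [hU₀]
    intro i hi
    have hi2 : ¬ l' ≤ (i : ℕ) := not_le.2 hi
    simp only [lam, if_neg hi2, sub_zero]
    have := hw (Sum.inl i)
    split_ifs <;> linarith
  have hlow : ∀ u : H, f p ≤ f u + 2 * ∑ i, lam i * (⟪u, r i⟫ - a i) := by
    intro u
    have h1 := hexp (u - p)
    rw [add_sub_cancel] at h1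
    have h2 := hstat (u - p)
    have h3 : 0 ≤ B (u - p) (u - p) := le_trans (by positivity) (hcoer (u - p))
    have h4 : ∑ i, lam i * (⟪u, r i⟫ - a i) = ∑ i, lam i * ⟪u - p, r i⟫ := by
      refine Finset.sum_congr rfl fun i _ => ?_
      have := hcomp i
      rw [inner_sub_left]
      linarith
    rw [h4]
    linarith
  have hge : ((f p : ℝ) : EReal) ≤ g lam := by
    rw [hg]
    exact le_iInf fun u => EReal.coe_le_coe_iff.2 (hlow u)
  have hweak : ∀ m ∈ U₀, g m ≤ ((f p : ℝ) : EReal) := by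
    intro m hm
    rw [hU₀] at hm
    rw [hg]
    refine (iInf_le _ p).trans (EReal.coe_le_coe_iff.2 ?_)
    have : ∑ i, m i * (⟪p, r i⟫ - a i) ≤ 0 := by
      refine Finset.sum_nonpos fun i _ => ?_
      rcases lt_or_ge (i : ℕ) l' with hi | hi
      · exact mul_nonpos_of_nonneg_of_nonpos (hm i hi) (by linarith [hp1 i hi])
      · rw [hp2 i hi]; simp
    linarith
  exact ⟨p, lam, hpK, hlamU, hmin, fun m hm => (hweak m hm).trans hge,
    le_antisymm hge (hweak lam hlamU)⟩
end
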